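/- For all n ≥ 13 and all binary sequences x, y of length n with Levenshtein distance d_L(x,y) ≥ 3, we have |D_4(x) ∩ D_4(y)| ≤ 20n − 166. -/

import Mathlib

/-!
Let `x` and `y` have length `n`. Distance at least `3` means that `x` and `y` have no common
subsequence of length `n - 2`, and the common subsequences of length `m = n - 4` are to be counted.
Their number is `LCS.F m x y`, which satisfies a recursion: a common subsequence starting with the
letter `a` is `a` followed by a common subsequence of what comes behind the first `a` in `x` and
in `y`.

Along this recursion three quantities matter (`LCS.Hyp`): the numbers `s` and `t` of letters that may
still be skipped in the two sequences, at first `4` and `4`, and whether a common subsequence can be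
one longer than counted (`u = true`, as at first) or not (`u = false`). They alone give a bound:
`(s + t).choose s` if `u = false` (`LCS.F_le_lb`, `LCS.lb_false_le`), and one growing by
`(s + t - 2).choose (s - 1)` per letter if `u = true` (`LCS.lb_true_succ`), which is `20` for
`s = t = 4`. So the slope `20` is right, but the constant term is not yet. It is improved by
following the recursion along beginnings of `x` and `y` and using the bound only at the end
(`LCS.F_le_ub`); the growth rates of the branches do not exceed `20` in total, so one finite
computation serves all lengths.

The theorem is proved by induction on `n` in the form `F m x y ≤ 94 + 20 * (n - 13)`. For `n = 13` a
search through the beginnings of `x` and `y` succeeds (`LCS.base`). For `n ≥ 14` (`LCS.step`), equal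
first letters can be removed: at most `(3 + 3).choose 3 = 20` common subsequences start with the
other letter. With different first letters, a search finds for each pair of beginnings either that
the bound holds, or another pair of beginnings, one letter shorter, that takes their place: writing
both numbers as sums of terms by the recursion (`LCS.nf`) and cancelling the common terms, the terms
with `u = true` all cancel and the rest contributes at most `20`. The terms with `u = true` also
decide whether there is a common subsequence two longer than counted (`LCS.nf_null`), so the shorter
pair satisfies the hypothesis again and the induction goes through (`LCS.removable_sound`).
-/

/-- The `t`-deletion ball of a binary sequence `x`: all subsequences of `x`
of length `|x| - t` (i.e., obtained by deleting exactly `t` symbols). -/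
def delBall (t : ℕ) (x : List Bool) : Set (List Bool) :=
  {z | z.Sublist x ∧ z.length + t = x.length}

/-- Levenshtein (deletion) distance between binary sequences. -/
noncomputable def levDist (x y : List Bool) : ℕ :=
  sInf {r | ((delBall r x) ∩ (delBall r y)).Nonempty}

/-- The alternating binary sequence of length `n` starting with `1` (= `true`). -/
def altSeq (n : ℕ) : List Bool :=
  (List.range n).map (fun k => decide (k % 2 = 0))

/-- Bitwise complement of a binary sequence. -/
def compl' (x : List Bool) : List Bool := x.map (fun b => !b)

/-- Elementwise concatenation of sets of sequences. -/
def setConcat (A B : Set (List Bool)) : Set (List Bool) :=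
  Set.image2 (· ++ ·) A B

namespace LCS

/-! ### The recursion on the first letter -/

/-- `after a x` is what follows the first occurrence of the letter `a` in `x`, if there is one. -/
def after (a : Bool) : List Bool → Option (List Bool)
  | [] => none
  | b :: x => if b = a then some x else after a x

/-- The number of common subsequences of length `m` of `x` and `y`, computed letter by letter:
a common subsequence starting with `a` is `a` followed by a common subsequence of the parts of
`x` and `y` behind their first `a`. -/
def F : ℕ → List Bool → List Bool → ℕ
  | 0, _, _ => 1
  | m + 1, x, y =>
    (match after false x, after false y with
      | some x', some y' => F m x' y'
      | _, _ => 0) +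
    (match after true x, after true y with
      | some x', some y' => F m x' y'
      | _, _ => 0)

/-- `F m` on possibly missing sequences, a missing one counting as having no subsequences. -/
def F2 (m : ℕ) : Option (List Bool) → Option (List Bool) → ℕ
  | some x, some y => F m x y
  | _, _ => 0

theorem F_succ (m : ℕ) (x y : List Bool) :
    F (m + 1) x y = F2 m (after false x) (after false y) + F2 m (after true x) (after true y) := by
  rw [F]
  cases after false x <;> cases after false y <;> cases after true x <;> cases after true y <;> rfl

theorem F_succ' (a : Bool) (m : ℕ) (x y : List Bool) :
    F (m + 1) x y = F2 m (after a x) (after a y) + F2 m (after (!a) x) (after (!a) y) := by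
  cases a
  · exact F_succ m x y
  · rw [F_succ, Nat.add_comm]; rfl

theorem F2_le (c : Bool) (m : ℕ) (x y : List Bool) :
    F2 m (after c x) (after c y) ≤ F (m + 1) x y := by
  rw [F_succ' c]; omega

theorem F2_none_right (m : ℕ) (x : Option (List Bool)) : F2 m x none = 0 := by
  cases x <;> rfl

theorem after_cons_self (a : Bool) (x : List Bool) : after a (a :: x) = some x := by
  simp [after]

theorem after_cons_ne {a b : Bool} (h : b ≠ a) (x : List Bool) :
    after a (b :: x) = after a x := by
  simp [after, h]

theorem after_length {a : Bool} {x x' : List Bool} (h : after a x = some x') :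
    x'.length + 1 ≤ x.length := by
  induction x with
  | nil => simp [after] at h
  | cons b x ih =>
    by_cases hb : b = a
    · simp [after, hb] at h; simp [h]
    · rw [after_cons_ne hb] at h; have := ih h; simp; omega

theorem F_short {m : ℕ} {x y : List Bool} (h : x.length < m ∨ y.length < m) : F m x y = 0 := by
  induction m generalizing x y with
  | zero => omega
  | succ m ih =>
    have key : ∀ c, F2 m (after c x) (after c y) = 0 := by
      intro c
      rcases hx : after c x with _ | x'
      · rfl
      · rcases hy : after c y with _ | y'
        · rfl
        · have := after_length hx
          have := after_length hy
          exact ih (by omega)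
    rw [F_succ, key, key]

/-- If there is no common subsequence of some length, there is no longer one. -/
theorem F_mono {m : ℕ} {x y : List Bool} (h : F m x y = 0) : F (m + 1) x y = 0 := by
  induction m generalizing x y with
  | zero => simp [F] at h
  | succ m ih =>
    have key : ∀ c, F2 (m + 1) (after c x) (after c y) = 0 := by
      intro c
      have h1 := F2_le c m x y
      rw [h] at h1
      rcases hx : after c x with _ | x'
      · rfl
      · rcases hy : after c y with _ | y'
        · rfl
        · rw [hx, hy] at h1
          exact ih (Nat.le_zero.mp h1)
    rw [F_succ, key, key]

theorem F_le_cons (a : Bool) (m : ℕ) (x y : List Bool) :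
    F m x y ≤ F (m + 1) (a :: x) (a :: y) := by
  have := F2_le a m (a :: x) (a :: y)
  rwa [after_cons_self, after_cons_self] at this

/-- A common first letter can be kept: a common subsequence of `a :: x` and `a :: y` that starts with
the other letter is one of `x` and `y`, too. -/
theorem F_cons_zero (a : Bool) {m : ℕ} {x y : List Bool} (h : F m x y = 0) :
    F (m + 1) (a :: x) (a :: y) = 0 := by
  rw [F_succ' a, after_cons_self, after_cons_self, after_cons_ne (by simp), after_cons_ne (by simp)]
  have h1 := F2_le (!a) m x y
  rw [F_mono h] at h1
  have h2 : F2 m (some x) (some y) = 0 := h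
  omega

theorem after_append {c : Bool} {x x' : List Bool} (X : List Bool) (h : after c x = some x') :
    after c (x ++ X) = some (x' ++ X) := by
  induction x with
  | nil => simp [after] at h
  | cons b x ih =>
    by_cases hb : b = c
    · simp [after, hb] at h ⊢; simp [h]
    · rw [after_cons_ne hb] at h
      rw [List.cons_append, after_cons_ne hb, ih h]

theorem F_append (m : ℕ) (x y X Y : List Bool) : F m x y ≤ F m (x ++ X) (y ++ Y) := by
  induction m generalizing x y with
  | zero => simp [F]
  | succ m ih =>
    have key : ∀ c, F2 m (after c x) (after c y) ≤ F2 m (after c (x ++ X)) (after c (y ++ Y)) := by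
      intro c
      rcases hx : after c x with _ | x'
      · exact Nat.zero_le _
      · rcases hy : after c y with _ | y'
        · exact Nat.zero_le _
        · rw [after_append X hx, after_append Y hy]
          exact ih _ _
    rw [F_succ, F_succ]
    exact Nat.add_le_add (key _) (key _)

theorem after_map_not (c : Bool) (x : List Bool) :
    after c (x.map not) = (after (!c) x).map (List.map not) := by
  induction x with
  | nil => rfl
  | cons b x ih => cases b <;> cases c <;> simp_all [after]

/-- Complementing both sequences does not change the number of common subsequences. -/
theorem F_map_not (m : ℕ) (x y : List Bool) : F m (x.map not) (y.map not) = F m x y := by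
  induction m generalizing x y with
  | zero => rfl
  | succ m ih =>
    have key : ∀ c, F2 m (after c (x.map not)) (after c (y.map not)) =
        F2 m (after (!c) x) (after (!c) y) := by
      intro c
      rw [after_map_not, after_map_not]
      rcases after (!c) x with _ | x'
      · rfl
      · rcases after (!c) y with _ | y'
        · rfl
        · exact ih _ _
    rw [F_succ, F_succ' true, key, key]; rfl

/-! ### Counting common subsequences -/

theorem cons_sublist_iff (a : Bool) (z x : List Bool) :
    (a :: z).Sublist x ↔ ∃ x', after a x = some x' ∧ z.Sublist x' := by
  induction x with
  | nil => simp [after]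
  | cons b x ih =>
    by_cases hb : b = a
    · subst hb; simp [after]
    · rw [after_cons_ne hb, ← ih]
      constructor
      · intro h
        cases h with
        | cons _ h => exact h
        | cons_cons _ h => exact absurd rfl hb
      · intro h; exact h.cons _

/-- The list of common subsequences of length `m`, along the recursion of `F`. -/
def commons : ℕ → List Bool → List Bool → List (List Bool)
  | 0, _, _ => [[]]
  | m + 1, x, y =>
    (match after false x, after false y with
      | some x', some y' => (commons m x' y').map (false :: ·)
      | _, _ => []) ++
    (match after true x, after true y with
      | some x', some y' => (commons m x' y').map (true :: ·)
      | _, _ => [])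

theorem commons_length (m : ℕ) (x y : List Bool) : (commons m x y).length = F m x y := by
  induction m generalizing x y with
  | zero => rfl
  | succ m ih =>
    rw [commons, F, List.length_append]
    congr 1 <;> split <;> simp_all

theorem mem_commons (m : ℕ) (x y z : List Bool) :
    z ∈ commons m x y ↔ z.Sublist x ∧ z.Sublist y ∧ z.length = m := by
  induction m generalizing x y z with
  | zero =>
    simp only [commons, List.mem_singleton, List.length_eq_zero_iff]
    constructor
    · rintro rfl; simp
    · exact fun h => h.2.2
  | succ m ih =>
    have key : ∀ c, z ∈ (match after c x, after c y with
      | some x', some y' => (commons m x' y').map (c :: ·)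
      | _, _ => []) ↔ ∃ w, z = c :: w ∧ z.Sublist x ∧ z.Sublist y ∧ w.length = m := by
      intro c
      rcases hx : after c x with _ | x'
      · simp only [List.not_mem_nil, false_iff]
        rintro ⟨w, rfl, h, -⟩
        simp [cons_sublist_iff, hx] at h
      · rcases hy : after c y with _ | y'
        · simp only [List.not_mem_nil, false_iff]
          rintro ⟨w, rfl, -, h, -⟩
          simp [cons_sublist_iff, hy] at h
        · simp only [List.mem_map, ih]
          constructor
          · rintro ⟨w, ⟨h1, h2, h3⟩, rfl⟩
            exact ⟨w, rfl, (cons_sublist_iff ..).2 ⟨_, hx, h1⟩,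
              (cons_sublist_iff ..).2 ⟨_, hy, h2⟩, h3⟩
          · rintro ⟨w, rfl, h1, h2, h3⟩
            rw [cons_sublist_iff, hx] at h1
            rw [cons_sublist_iff, hy] at h2
            simp at h1 h2
            exact ⟨w, ⟨h1, h2, h3⟩, rfl⟩
    rw [commons, List.mem_append, key, key]
    constructor
    · rintro (⟨w, rfl, h1, h2, h3⟩ | ⟨w, rfl, h1, h2, h3⟩) <;> exact ⟨h1, h2, by simp [h3]⟩
    · rintro ⟨h1, h2, h3⟩
      rcases z with _ | ⟨c, w⟩
      · simp at h3
      · simp at h3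
        cases c
        · exact Or.inl ⟨w, rfl, h1, h2, h3⟩
        · exact Or.inr ⟨w, rfl, h1, h2, h3⟩

/-! ### Bounds from the lengths alone -/

/-- The state of the recursion: `x` and `y` exceed the length `K` of the subsequences counted by
at most `s` and `t`, and have no common subsequence of length `K + 1` (when `u = false`) or
`K + 2` (when `u = true`). -/
def Hyp (K s t : ℕ) (u : Bool) (x y : List Bool) : Prop :=
  x.length ≤ K + s ∧ y.length ≤ K + t ∧ F (K + 1 + u.toNat) x y = 0

/-- The bound on `F m x y` that the recursion gives from `Hyp m s t u x y` alone, the two sequences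
starting with the same letter in the first argument of the maximum and with different letters in
the second. -/
def lb : ℕ → ℕ → ℕ → Bool → ℕ
  | 0, _, _, _ => 1
  | _ + 1, 0, _, _ => 1
  | _ + 1, _ + 1, 0, _ => 1
  | m + 1, s + 1, t + 1, u =>
    max (lb m (s + 1) (t + 1) u + bif u then lb m s t false else 0)
      (lb m s (t + 1) u + lb m (s + 1) t u)

theorem lb_zero_left (m t : ℕ) (u : Bool) : lb m 0 t u = 1 := by cases m <;> rfl

theorem lb_zero_right (m s : ℕ) (u : Bool) : lb m s 0 u = 1 := by
  cases m <;> cases s <;> rfl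

theorem Hyp.next {K s t : ℕ} {u c : Bool} {x y x' y' : List Bool} {s' t' : ℕ}
    (h : Hyp (K + 1) s t u x y) (hx : after c x = some x') (hy : after c y = some y')
    (hs : x'.length ≤ K + s') (ht : y'.length ≤ K + t') : Hyp K s' t' u x' y' := by
  refine ⟨hs, ht, ?_⟩
  have h1 := F2_le c (K + 1 + u.toNat) x y
  rw [hx, hy, show K + 1 + u.toNat + 1 = K + 1 + 1 + u.toNat by omega, h.2.2] at h1
  exact Nat.le_zero.mp h1

/-- A letter that differs from a common first letter `a` gives a common subsequence that `a` still
can be put in front of, so the slack `u` drops. -/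
theorem F_drop {a c : Bool} (hc : a ≠ c) {n : ℕ} {x y x' y' : List Bool}
    (h : F (n + 2) (a :: x) (a :: y) = 0) (hx : after c (a :: x) = some x')
    (hy : after c (a :: y) = some y') : F n x' y' = 0 := by
  rw [after_cons_ne hc] at hx hy
  have h1 := F2_le c n x y
  rw [hx, hy] at h1
  have h2 := F_le_cons a (n + 1) x y
  rw [h] at h2
  exact Nat.le_zero.mp (h1.trans h2)

/-- The bound from the lengths. With equal first letters, the subsequences starting with the other
letter use up one letter of both sequences and the slack `u`; with different first letters, either
choice skips at least one letter of one sequence. -/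
theorem F_le_lb (m : ℕ) {s t : ℕ} {u : Bool} {x y : List Bool} (h : Hyp m s t u x y) :
    F m x y ≤ lb m s t u := by
  induction m generalizing s t u x y with
  | zero => simp [F, lb]
  | succ m ih =>
    rcases x with _ | ⟨a, x⟩
    · rw [F_short (by simp)]; exact Nat.zero_le _
    rcases y with _ | ⟨b, y⟩
    · rw [F_short (by simp)]; exact Nat.zero_le _
    have hl := h.1
    have hr := h.2.1
    simp only [List.length_cons] at hl hr
    by_cases hab : b = a
    · subst hab
      have h1 : F2 m (after b (b :: x)) (after b (b :: y)) ≤ lb m s t u := by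
        rw [after_cons_self, after_cons_self]
        exact ih (h.next (after_cons_self ..) (after_cons_self ..) (by omega) (by omega))
      have h2 : F2 m (after (!b) (b :: x)) (after (!b) (b :: y)) ≤
          match s, t with
          | s + 1, t + 1 => bif u then lb m s t false else 0
          | _, _ => 0 := by
        rcases hx : after (!b) (b :: x) with _ | x'
        · exact Nat.zero_le _
        rcases hy : after (!b) (b :: y) with _ | y'
        · exact Nat.zero_le _
        change F m x' y' ≤ _
        have hx' := hx
        have hy' := hy
        rw [after_cons_ne (by simp)] at hx' hy'
        have l1 := after_length hx'
        have l2 := after_length hy'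
        have h3 := h.2.2
        rcases s with _ | s
        · rw [F_short (by omega)]
        rcases t with _ | t
        · rw [F_short (by omega)]
        cases u
        · rw [F_drop (by simp) h3 hx hy]; exact Nat.zero_le _
        · exact ih ⟨by omega, by omega, F_drop (by simp) h3 hx hy⟩
      rw [F_succ' b]
      rcases s with _ | s
      · rw [lb_zero_left] at h1 ⊢; simp only at h2; omega
      rcases t with _ | t
      · rw [lb_zero_right] at h1 ⊢; simp only at h2; omega
      simp only at h2
      exact le_trans (Nat.add_le_add h1 h2) (le_max_left _ _)
    · have h1 : F2 m (after a (a :: x)) (after a (b :: y)) ≤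
          match t with
          | t + 1 => lb m s t u
          | 0 => 0 := by
        rcases hy : after a (b :: y) with _ | y'
        · rw [F2_none_right]; exact Nat.zero_le _
        rw [after_cons_self]
        change F m x y' ≤ _
        have hy' := hy
        rw [after_cons_ne hab] at hy'
        have l2 := after_length hy'
        rcases t with _ | t
        · rw [F_short (by omega)]
        exact ih (h.next (after_cons_self ..) hy (by omega) (by omega))
      have h2 : F2 m (after (!a) (a :: x)) (after (!a) (b :: y)) ≤
          match s with
          | s + 1 => lb m s t u
          | 0 => 0 := by
        have hb : b = !a := by cases a <;> cases b <;> simp_all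
        subst hb
        rcases hx : after (!a) (a :: x) with _ | x'
        · exact Nat.zero_le _
        rw [after_cons_self]
        change F m x' y ≤ _
        have hx' := hx
        rw [after_cons_ne (by simp)] at hx'
        have l2 := after_length hx'
        rcases s with _ | s
        · rw [F_short (by omega)]
        exact ih (h.next hx (after_cons_self ..) (by omega) (by omega))
      rw [F_succ' a]
      rcases s with _ | s
      · rw [lb_zero_left]
        rcases t with _ | t
        · simp only at h1 h2; omega
        · simp only [lb_zero_left] at h1 h2; omega
      rcases t with _ | t
      · rw [lb_zero_right]; simp only [lb_zero_right] at h1 h2; omega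
      simp only at h1 h2
      refine le_trans ?_ (le_max_right _ _)
      omega

theorem lb_false_le (m s t : ℕ) : lb m s t false ≤ (s + t).choose s := by
  induction m generalizing s t with
  | zero => exact Nat.choose_pos (by omega)
  | succ m ih =>
    rcases s with _ | s
    · simp [lb]
    rcases t with _ | t
    · simp [lb]
    have h1 := ih (s + 1) (t + 1)
    have h2 := ih s (t + 1)
    have h3 := ih (s + 1) t
    rw [lb]
    have : (s + 1 + (t + 1)).choose (s + 1) = (s + (t + 1)).choose s + (s + 1 + t).choose (s + 1) := by
      rw [show s + 1 + (t + 1) = (s + t + 1) + 1 by ring, Nat.choose_succ_succ,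
        show s + (t + 1) = s + t + 1 by ring, show s + 1 + t = s + t + 1 by ring]
    refine max_le ?_ ?_
    · simpa using h1
    · omega

/-- The growth of `lb m s t u` in `m`. -/
def growth : Bool → ℕ → ℕ → ℕ
  | true, s + 1, t + 1 => (s + t).choose s
  | _, _, _ => 0

theorem growth_pascal (s t : ℕ) :
    growth true s (t + 1) + growth true (s + 1) t ≤ growth true (s + 1) (t + 1) := by
  rcases s with _ | s <;> rcases t with _ | t
  · simp [growth]
  · simp [growth]
  · simp [growth]
  · simp only [growth]
    rw [show s + 1 + (t + 1) = (s + t + 1) + 1 by ring, Nat.choose_succ_succ,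
        show s + (t + 1) = s + t + 1 by ring, show s + 1 + t = s + t + 1 by ring]

/-- With slack, the bound grows at most linearly in the length; at `s = t = 4` the rate is
`(3 + 3).choose 3 = 20`. -/
theorem lb_true_succ (m s t : ℕ) : lb (m + 1) s t true ≤ lb m s t true + growth true s t := by
  induction m generalizing s t with
  | zero =>
    rcases s with _ | s
    · simp [lb]
    rcases t with _ | t
    · simp [lb]
    have : 0 < (s + t).choose s := Nat.choose_pos (by omega)
    simp [lb, growth]
    omega
  | succ m ih =>
    rcases s with _ | s
    · simp [lb]
    rcases t with _ | t
    · simp [lb]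
    have h1 := ih s (t + 1)
    have h2 := ih (s + 1) t
    have h3 := growth_pascal s t
    rw [lb]
    refine max_le ?_ ?_
    · have := lb_false_le (m + 1) s t
      simp only [growth, cond_true]
      omega
    · have : lb m s (t + 1) true + lb m (s + 1) t true ≤ lb (m + 1) (s + 1) (t + 1) true :=
        le_max_right _ _
      omega

theorem lb_true_add (m s t j : ℕ) : lb (m + j) s t true ≤ lb m s t true + growth true s t * j := by
  induction j with
  | zero => simp
  | succ j ih =>
    have := lb_true_succ (m + j) s t
    rw [Nat.mul_succ]
    rw [show m + (j + 1) = m + j + 1 by ring]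
    omega

/-! ### Splitting along known beginnings -/

/-- Values of `lb k (s + 1) (t + 1) false`, at `[s][t][k]`. -/
def tab0 : List (List (List ℕ)) :=
  [[[1, 2, 2, 2, 2, 2, 2, 2, 2, 2, 2],
    [1, 2, 3, 3, 3, 3, 3, 3, 3, 3, 3],
    [1, 2, 3, 4, 4, 4, 4, 4, 4, 4, 4],
    [1, 2, 3, 4, 5, 5, 5, 5, 5, 5, 5]],
   [[1, 2, 3, 3, 3, 3, 3, 3, 3, 3, 3],
    [1, 2, 4, 6, 6, 6, 6, 6, 6, 6, 6],
    [1, 2, 4, 7, 10, 10, 10, 10, 10, 10, 10],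
    [1, 2, 4, 7, 11, 15, 15, 15, 15, 15, 15]],
   [[1, 2, 3, 4, 4, 4, 4, 4, 4, 4, 4],
    [1, 2, 4, 7, 10, 10, 10, 10, 10, 10, 10],
    [1, 2, 4, 8, 14, 20, 20, 20, 20, 20, 20],
    [1, 2, 4, 8, 15, 25, 35, 35, 35, 35, 35]],
   [[1, 2, 3, 4, 5, 5, 5, 5, 5, 5, 5],
    [1, 2, 4, 7, 11, 15, 15, 15, 15, 15, 15],
    [1, 2, 4, 8, 15, 25, 35, 35, 35, 35, 35],
    [1, 2, 4, 8, 16, 30, 50, 70, 70, 70, 70]]]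

/-- Values of `lb k (s + 1) (t + 1) true`, at `[s][t][k]`. -/
def tab1 : List (List (List ℕ)) :=
  [[[1, 2, 3, 4, 5, 6, 7, 8, 9, 10, 11],
    [1, 2, 3, 4, 5, 6, 7, 8, 9, 10, 11],
    [1, 2, 3, 4, 5, 6, 7, 8, 9, 10, 11],
    [1, 2, 3, 4, 5, 6, 7, 8, 9, 10, 11]],
   [[1, 2, 3, 4, 5, 6, 7, 8, 9, 10, 11],
    [1, 2, 4, 6, 8, 10, 12, 14, 16, 18, 20],
    [1, 2, 4, 7, 10, 13, 16, 19, 22, 25, 28],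
    [1, 2, 4, 7, 11, 15, 19, 23, 27, 31, 35]],
   [[1, 2, 3, 4, 5, 6, 7, 8, 9, 10, 11],
    [1, 2, 4, 7, 10, 13, 16, 19, 22, 25, 28],
    [1, 2, 4, 8, 14, 20, 26, 32, 38, 44, 50],
    [1, 2, 4, 8, 15, 25, 35, 45, 55, 65, 75]],
   [[1, 2, 3, 4, 5, 6, 7, 8, 9, 10, 11],
    [1, 2, 4, 7, 11, 15, 19, 23, 27, 31, 35],
    [1, 2, 4, 8, 15, 25, 35, 45, 55, 65, 75],
    [1, 2, 4, 8, 16, 30, 50, 70, 90, 110, 130]]]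

/-- `lb`, read off from tables in the range where it gets evaluated. -/
def leafB (k s t : ℕ) (u : Bool) : ℕ :=
  match s, t with
  | s + 1, t + 1 =>
    bif Nat.blt k 11 && Nat.blt s 4 && Nat.blt t 4 then
      (((bif u then tab1 else tab0).getD s []).getD t []).getD k 0
    else lb k (s + 1) (t + 1) u
  | _, _ => 1

/-- Like `leafB`, but for `u = false` the bound `(s + t).choose s`, which does not depend on `k`. -/
def leafG (k s t : ℕ) (u : Bool) : ℕ :=
  bif u then leafB k s t true
  else match s, t with
  | s + 1, t + 1 =>
    bif Nat.blt s 4 && Nat.blt t 4 then ((tab0.getD s []).getD t []).getD 10 0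
    else (s + 1 + (t + 1)).choose (s + 1)
  | _, _ => 1

/-- Drop the part of `p` up to and including its first `c`, or all of `p` if `c` does not occur in
it. The budget `s` pays for the letters in front of `c`; the result is `none` if it is exceeded. -/
def adv (c : Bool) : ℕ → List Bool → Option (ℕ × List Bool)
  | s, [] => some (s, [])
  | s, b :: p =>
    bif Bool.xor b c then
      match s with
      | 0 => none
      | s + 1 => adv c s p
    else some (s, p)

/-- The slack left after choosing `c` as the first letter: it drops if `p` and `q` both start with
the other letter, and `none` means that it would become negative. -/
def drp (c : Bool) (u : Bool) : List Bool → List Bool → Option Bool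
  | a :: _, b :: _ =>
    bif Bool.xor a c && Bool.xor b c then bif u then some false else none else some u
  | _, _ => some u

/-- The state reached by choosing `c` as the first letter, `none` if nothing is left to count. -/
def child (c : Bool) (s t : ℕ) (u : Bool) (p q : List Bool) :
    Option (ℕ × ℕ × Bool × List Bool × List Bool) :=
  match drp c u p q with
  | none => none
  | some u' =>
    match adv c s p with
    | none => none
    | some (s', p') =>
      match adv c t q with
      | none => none
      | some (t', q') => some (s', t', u', p', q')

/-- Bound on `F k (p ++ X) (q ++ Y)` for unknown `X`, `Y`: the better of the bound `ℓ` from the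
lengths and the sum of the bounds for the two possible first letters. -/
def ub (ℓ : ℕ → ℕ → ℕ → Bool → ℕ) : ℕ → ℕ → ℕ → Bool → List Bool → List Bool → ℕ
  | 0, s, t, u, _, _ => ℓ 0 s t u
  | k + 1, s, t, u, p, q =>
    bif p.isEmpty || q.isEmpty || Nat.beq s 0 || Nat.beq t 0 then ℓ (k + 1) s t u
    else min (ℓ (k + 1) s t u)
      ((match child false s t u p q with
        | none => 0
        | some (s', t', u', p', q') => ub ℓ k s' t' u' p' q') +
      (match child true s t u p q with
        | none => 0
        | some (s', t', u', p', q') => ub ℓ k s' t' u' p' q'))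

/-- All four ways to prolong `p` and `q` by one letter satisfy `f`. -/
def all4 (f : List Bool → List Bool → Bool) (p q : List Bool) : Bool :=
  f (p ++ [false]) (q ++ [false]) && f (p ++ [false]) (q ++ [true]) &&
    f (p ++ [true]) (q ++ [false]) && f (p ++ [true]) (q ++ [true])

/-- Search through the beginnings of two sequences of length `13`, stopping where the bound is good
enough or there is a common subsequence of length `11`. -/
def searchB : ℕ → List Bool → List Bool → Bool
  | 0, _, _ => false
  | d + 1, p, q =>
    Nat.ble (ub leafB 9 4 4 true p q) 94 || !(Nat.beq (F 11 p q) 0) ||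
      (Nat.blt p.length 13 && Nat.blt q.length 13 && all4 (searchB d) p q)

/-- A term `(k, s, t, u, o, w, v)` of a complete splitting: it stands for
`F k (w ++ X) (v ++ Y)`, or for the part of `F (k + 1) (w ++ X) (v ++ Y)` that counts common
subsequences starting with `c` if `o = some c`, and `s`, `t`, `u` are as in `Hyp`. -/
abbrev Term := ℕ × ℕ × ℕ × Bool × Option Bool × List Bool × List Bool

/-- The complete splitting of `F k (p ++ X) (q ++ Y)` along `p` and `q`. -/
def nf : ℕ → ℕ → ℕ → Bool → List Bool → List Bool → List Term
  | 0, s, t, u, p, q => [(0, s, t, u, none, p, q)]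
  | k + 1, s, t, u, p, q =>
    bif p.isEmpty || q.isEmpty then [(k + 1, s, t, u, none, p, q)]
    else
      (match child false s t u p q with
        | none => []
        | some (s', t', u', p', q') =>
          bif p.contains false && q.contains false then nf k s' t' u' p' q'
          else [(k, s', t', u', some false, bif p.contains false then false :: p' else [],
            bif q.contains false then false :: q' else [])]) ++
      (match child true s t u p q with
        | none => []
        | some (s', t', u', p', q') =>
          bif p.contains true && q.contains true then nf k s' t' u' p' q'
          else [(k, s', t', u', some true, bif p.contains true then true :: p' else [],
            bif q.contains true then true :: q' else [])])

/-- Decides that passing from the beginnings `p`, `q` to the one letter shorter `p'`, `q'` loses at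
most `20` subsequences: all terms with `u = true` are common to both splittings, and what remains of
the first one after cancellation is at most `20`. -/
def removable (p q p' q' : List Bool) : Bool :=
  let n1 := nf 10 4 4 true p q
  let n2 := nf 9 4 4 true p' q'
  let d := n1.diff n2
  Nat.beq (p'.length + 1) p.length && Nat.beq (q'.length + 1) q.length &&
  n2.all (fun τ => !τ.2.2.2.1 || n1.contains τ) &&
  d.all (fun τ => !τ.2.2.2.1) &&
  Nat.ble ((d.map fun τ => (τ.2.1 + τ.2.2.1).choose τ.2.1).sum) 20

/-- The word spelled by the decimal digits of a number, without the leading `1`. -/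
def word : ℕ → ℕ → List Bool → List Bool
  | 0, _, w => w
  | d + 1, n, w => bif Nat.ble n 1 then w else word d (n / 10) (Nat.beq (n % 10) 1 :: w)

/-- Pairs of beginnings `p`, `q`, each with a pair `p'`, `q'` for which `removable p q p' q'` holds.
Only the splittings have to match, so `p'` need not be a subsequence of `p`. -/
def removals : List (ℕ × ℕ × ℕ × ℕ) :=
  [(1010010101, 1100100101, 110110101, 101101101),
   (101001010101, 110010100101, 10100110101, 11001010101),
   (101001010, 110010101, 11011010, 10110101),
   (101001101010, 110010101010, 11011001010, 10110101010),
   (101010010101, 110010010101, 11010110101, 10110110101),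
   (1010100, 1100101, 101100, 110101),
   (10101010101, 11001001010, 1010100101, 1100101010),
   (1010101, 1100101, 101101, 110101),
   (1010101010101, 1100110010101, 110101010101, 101100110101),
   (1010101010, 1100110101, 110101010, 101100101),
   (1010101101010, 1100110101010, 110101001010, 101100101010),
   (1010, 1101, 110, 101),
   (1011001010101, 1101010010101, 110011010101, 101010110101),
   (1011001010, 1101010101, 110011010, 101010101),
   (1011001101010, 1101010101010, 110011001010, 101010101010),
   (1011010, 1101010, 101010, 110010),
   (1011010, 1101011, 101010, 110011),
   (10110110101, 11010101010, 1011010101, 1101011010),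
   (101101101010, 110101101010, 11001001010, 10101001010),
   (101101010101, 110110010101, 11001010101, 10100110101),
   (101101010, 110110101, 11001010, 10100101),
   (101101011010, 110110101010, 10110101010, 11011001010),
   (1011011010, 1101101010, 110010010, 101001010)]

/-- Search through the beginnings of two sequences of length at least `14`, stopping where the bound
is good enough or a removal is possible. -/
def searchG : ℕ → List Bool → List Bool → Bool
  | 0, _, _ => false
  | d + 1, p, q =>
    Nat.ble (ub leafG 10 4 4 true p q) 114 ||
      removals.any (fun r => word 14 r.1 [] == p && word 14 r.2.1 [] == q &&
        removable p q (word 14 r.2.2.1 []) (word 14 r.2.2.2 [])) ||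
      (Nat.blt p.length 14 && Nat.blt q.length 14 && all4 (searchG d) p q)

/-! ### Evaluation of the searches and the tables -/

/-- Complementing both sequences makes the first one start with `false`, and equal first letters do
not need a search, see `step`. -/
theorem searchG_ft : searchG 12 [false] [true] = true := by decide +kernel

theorem searchB_ft : searchB 13 [false] [true] = true := by decide +kernel

theorem searchB_ff : searchB 13 [false] [false] = true := by decide +kernel

theorem tab_le : ∀ k < 11, ∀ s < 4, ∀ t < 4, ∀ u : Bool, lb k (s + 1) (t + 1) u ≤
    (((bif u then tab1 else tab0).getD s []).getD t []).getD k 0 := by decide +kernel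

theorem tab_ge : ∀ s < 4, ∀ t < 4, (s + 1 + (t + 1)).choose (s + 1) ≤
    ((tab0.getD s []).getD t []).getD 10 0 := by decide +kernel

/-! ### Soundness of the splitting -/

theorem adv_cons (c b : Bool) (s : ℕ) (p : List Bool) : adv c s (b :: p) =
    bif Bool.xor b c then
      match s with
      | 0 => none
      | s + 1 => adv c s p
    else some (s, p) := by
  cases s <;> rfl

theorem adv_le {c : Bool} {s s' : ℕ} {p p' : List Bool} (h : adv c s p = some (s', p')) :
    s' ≤ s := by
  induction p generalizing s with
  | nil => simp [adv] at h; omega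
  | cons b p ih =>
    rw [adv_cons] at h
    cases hb : Bool.xor b c <;> rw [hb] at h
    · simp at h; omega
    · rcases s with _ | s
      · simp at h
      · have := ih h; omega

theorem adv_sound {c : Bool} {s K : ℕ} {p X x' : List Bool} (hl : (p ++ X).length ≤ K + 1 + s)
    (hx : after c (p ++ X) = some x') :
    match adv c s p with
    | none => x'.length < K
    | some (s', p') => ∃ X', x' = p' ++ X' ∧ x'.length ≤ K + s' := by
  induction p generalizing s with
  | nil =>
    have := after_length hx
    simp only [adv]
    exact ⟨x', rfl, by omega⟩
  | cons b p ih =>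
    rw [adv_cons]
    by_cases hb : b = c
    · subst hb
      rw [List.cons_append, after_cons_self] at hx
      obtain rfl := Option.some.inj hx
      simp only [Bool.xor_self, cond_false]
      exact ⟨X, rfl, by simp at hl ⊢; omega⟩
    · have hb' : Bool.xor b c = true := by cases b <;> cases c <;> simp_all
      rw [List.cons_append, after_cons_ne hb] at hx
      simp only [List.cons_append, List.length_cons] at hl
      rw [hb', cond_true]
      rcases s with _ | s
      · have := after_length hx
        simp only
        omega
      · exact ih (by omega) hx

/-- What follows the first `c` is known up to the unknown part `X`, also if `c` does not occur in
`p`: then `p` can be dropped. -/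
theorem adv_after {c : Bool} {s s' : ℕ} {p p' : List Bool} (X : List Bool)
    (h : adv c s p = some (s', p')) :
    after c (p ++ X) = after c ((bif p.contains c then c :: p' else []) ++ X) := by
  induction p generalizing s with
  | nil => simp
  | cons b p ih =>
    rw [adv_cons] at h
    by_cases hb : b = c
    · subst hb
      simp only [Bool.xor_self, cond_false, Option.some.injEq, Prod.mk.injEq] at h
      simp [after_cons_self, h.2]
    · have hb' : Bool.xor b c = true := by cases b <;> cases c <;> simp_all
      rw [hb', cond_true] at h
      rcases s with _ | s
      · simp at h
      · rw [List.cons_append, after_cons_ne hb, ih h]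
        have : (b :: p).contains c = p.contains c := by
          simp [Ne.symm hb]
        rw [this]

theorem drp_sound {c u : Bool} {K : ℕ} {p q X Y x' y' : List Bool}
    (h : F (K + 2 + u.toNat) (p ++ X) (q ++ Y) = 0) (hx : after c (p ++ X) = some x')
    (hy : after c (q ++ Y) = some y') :
    match drp c u p q with
    | none => F K x' y' = 0
    | some u' => F (K + 1 + u'.toNat) x' y' = 0 := by
  have h0 : F (K + 1 + u.toNat) x' y' = 0 := by
    have h1 := F2_le c (K + 1 + u.toNat) (p ++ X) (q ++ Y)
    rw [hx, hy, show K + 1 + u.toNat + 1 = K + 2 + u.toNat by omega, h] at h1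
    exact Nat.le_zero.mp h1
  rcases p with _ | ⟨a, p⟩
  · exact h0
  rcases q with _ | ⟨b, q⟩
  · exact h0
  rw [drp]
  cases hc : Bool.xor a c && Bool.xor b c
  · exact h0
  · have ha : a ≠ c := by cases a <;> cases c <;> simp_all
    have hb : b = a := by cases a <;> cases b <;> cases c <;> simp_all
    subst hb
    cases u
    · exact F_drop ha h hx hy
    · exact F_drop ha h hx hy

/-- A first letter `c` contributes nothing if `child` says so, and otherwise leads to the state that
`child` describes. -/
theorem child_sound {c u : Bool} {s t K : ℕ} {p q X Y : List Bool}
    (h : Hyp (K + 1) s t u (p ++ X) (q ++ Y)) :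
    F2 K (after c (p ++ X)) (after c (q ++ Y)) = 0 ∨
    ∃ s' t' u' p' q' X' Y', child c s t u p q = some (s', t', u', p', q') ∧
      after c (p ++ X) = some (p' ++ X') ∧ after c (q ++ Y) = some (q' ++ Y') ∧
      Hyp K s' t' u' (p' ++ X') (q' ++ Y') := by
  rcases hx : after c (p ++ X) with _ | x'
  · exact Or.inl rfl
  rcases hy : after c (q ++ Y) with _ | y'
  · exact Or.inl rfl
  have h1 := drp_sound (K := K) (by rw [← h.2.2]) hx hy
  have h2 := adv_sound h.1 hx
  have h3 := adv_sound h.2.1 hy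
  rw [child]
  rcases hd : drp c u p q with _ | u'
  · rw [hd] at h1; exact Or.inl h1
  rcases ha : adv c s p with _ | ⟨s', p'⟩
  · rw [ha] at h2; exact Or.inl (F_short (Or.inl h2))
  rcases hb : adv c t q with _ | ⟨t', q'⟩
  · rw [hb] at h3; exact Or.inl (F_short (Or.inr h3))
  rw [hd] at h1
  rw [ha] at h2
  rw [hb] at h3
  obtain ⟨X', rfl, h2⟩ := h2
  obtain ⟨Y', rfl, h3⟩ := h3
  exact Or.inr ⟨s', t', u', p', q', X', Y', rfl, rfl, rfl, h2, h3, h1⟩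

theorem child_some {c u : Bool} {s t : ℕ} {p q : List Bool} {s' t' : ℕ} {u' : Bool}
    {p' q' : List Bool} (h : child c s t u p q = some (s', t', u', p', q')) :
    drp c u p q = some u' ∧ adv c s p = some (s', p') ∧ adv c t q = some (t', q') := by
  rw [child] at h
  rcases hd : drp c u p q with _ | u'
  · simp [hd] at h
  rcases ha : adv c s p with _ | ⟨s', p'⟩
  · simp [hd, ha] at h
  rcases hb : adv c t q with _ | ⟨t', q'⟩
  · simp [hd, ha, hb] at h
  simp only [hd, ha, hb, Option.some.injEq, Prod.mk.injEq] at h ⊢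
  tauto

/-- The growth of the bound in the state reached by the first letter `c`. -/
def childGrowth (c : Bool) (s t : ℕ) (u : Bool) (p q : List Bool) : ℕ :=
  match child c s t u p q with
  | none => 0
  | some (s', t', u', _, _) => growth u' s' t'

theorem growth_mono {u : Bool} {s s' t t' : ℕ} (hs : s' ≤ s) (ht : t' ≤ t) :
    growth u s' t' ≤ growth u s t := by
  cases u
  · simp [growth]
  rcases s' with _ | s'
  · simp [growth]
  rcases t' with _ | t'
  · simp [growth]
  obtain ⟨s, rfl⟩ : ∃ r, s = r + 1 := ⟨s - 1, by omega⟩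
  obtain ⟨t, rfl⟩ : ∃ r, t = r + 1 := ⟨t - 1, by omega⟩
  simp only [growth]
  calc (s' + t').choose s' ≤ (s' + t).choose s' := Nat.choose_le_choose _ (by omega)
    _ = (s' + t).choose t := Nat.choose_symm_add
    _ ≤ (s + t).choose t := Nat.choose_le_choose _ (by omega)
    _ = (s + t).choose s := Nat.choose_symm_add.symm

theorem growth_false (s t : ℕ) : growth false s t = 0 := rfl

theorem childGrowth_self {a u : Bool} {s t : ℕ} {p q : List Bool} :
    childGrowth a s t u (a :: p) (a :: q) ≤ growth u s t := by
  rw [childGrowth]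
  split
  · exact Nat.zero_le _
  · next h =>
    obtain ⟨h1, h2, h3⟩ := child_some h
    simp [drp] at h1
    subst h1
    exact growth_mono (adv_le h2) (adv_le h3)

theorem childGrowth_other {a u : Bool} {s t : ℕ} {p q : List Bool} :
    childGrowth (!a) s t u (a :: p) (a :: q) = 0 := by
  rw [childGrowth]
  split
  · rfl
  · next h =>
    obtain ⟨h1, -, -⟩ := child_some h
    cases u <;> simp [drp] at h1
    subst h1
    rfl

theorem childGrowth_left {a u : Bool} {s t : ℕ} {p q : List Bool} :
    childGrowth a s (t + 1) u (a :: p) ((!a) :: q) ≤ growth u s t := by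
  rw [childGrowth]
  split
  · exact Nat.zero_le _
  · next h =>
    obtain ⟨h1, h2, h3⟩ := child_some h
    simp [drp] at h1
    subst h1
    rw [adv] at h3
    simp only [Bool.not_xor, Bool.xor_self, Bool.not_false, cond_true] at h3
    exact growth_mono (adv_le h2) (adv_le h3)

theorem childGrowth_right {a u : Bool} {s t : ℕ} {p q : List Bool} :
    childGrowth (!a) (s + 1) t u (a :: p) ((!a) :: q) ≤ growth u s t := by
  rw [childGrowth]
  split
  · exact Nat.zero_le _
  · next h =>
    obtain ⟨h1, h2, h3⟩ := child_some h
    simp [drp] at h1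
    subst h1
    rw [adv] at h2
    simp only [Bool.xor_not, Bool.xor_self, Bool.not_false, cond_true] at h2
    exact growth_mono (adv_le h2) (adv_le h3)

/-- Splitting does not increase the growth rate. -/
theorem childGrowth_add {u : Bool} {s t : ℕ} {p q : List Bool} (hp : p ≠ []) (hq : q ≠ [])
    (hs : s ≠ 0) (ht : t ≠ 0) :
    childGrowth false s t u p q + childGrowth true s t u p q ≤ growth u s t := by
  obtain ⟨s, rfl⟩ := Nat.exists_eq_succ_of_ne_zero hs
  obtain ⟨t, rfl⟩ := Nat.exists_eq_succ_of_ne_zero ht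
  rcases p with _ | ⟨a, p⟩
  · exact absurd rfl hp
  rcases q with _ | ⟨b, q⟩
  · exact absurd rfl hq
  have comm : ∀ c : Bool, childGrowth false (s + 1) (t + 1) u (a :: p) (b :: q) +
      childGrowth true (s + 1) (t + 1) u (a :: p) (b :: q) =
      childGrowth c (s + 1) (t + 1) u (a :: p) (b :: q) +
      childGrowth (!c) (s + 1) (t + 1) u (a :: p) (b :: q) := by
    intro c; cases c
    · rfl
    · exact Nat.add_comm _ _
  rw [Nat.succ_eq_add_one, Nat.succ_eq_add_one, comm a]
  by_cases hab : b = a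
  · subst hab
    rw [childGrowth_other, Nat.add_zero]
    exact childGrowth_self
  · obtain rfl : b = !a := by cases a <;> cases b <;> simp_all
    refine (Nat.add_le_add childGrowth_left childGrowth_right).trans ?_
    cases u
    · exact le_refl _
    · rw [Nat.add_comm]; exact growth_pascal s t

/-- What `ub` needs of a bound `ℓ` from the lengths: it holds with `k + j` for `k`, up to the growth
in `j`. -/
def Leaf (ℓ : ℕ → ℕ → ℕ → Bool → ℕ) (j : ℕ) : Prop :=
  ∀ k s t u x y, Hyp (k + j) s t u x y → F (k + j) x y ≤ ℓ k s t u + growth u s t * j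

/-- Splitting along the beginnings keeps the bound valid for all lengths at once: the growth rates of
the two branches add up to at most the growth rate before. -/
theorem F_le_ub {ℓ : ℕ → ℕ → ℕ → Bool → ℕ} {j : ℕ} (hℓ : Leaf ℓ j) (k : ℕ) {s t : ℕ} {u : Bool}
    {p q X Y : List Bool} (h : Hyp (k + j) s t u (p ++ X) (q ++ Y)) :
    F (k + j) (p ++ X) (q ++ Y) ≤ ub ℓ k s t u p q + growth u s t * j := by
  induction k generalizing s t u p q X Y with
  | zero => exact hℓ 0 s t u _ _ h
  | succ k ih =>
    rw [ub]
    cases hc : p.isEmpty || q.isEmpty || Nat.beq s 0 || Nat.beq t 0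
    · simp only [Bool.or_eq_false_iff, List.isEmpty_eq_false_iff] at hc
      rw [cond_false]
      have both : ∀ f a b g : ℕ, f ≤ a + g → f ≤ b + g → f ≤ min a b + g := by omega
      refine both _ _ _ _ (hℓ _ _ _ _ _ _ h) ?_
      have key : ∀ c, F2 (k + j) (after c (p ++ X)) (after c (q ++ Y)) ≤
          (match child c s t u p q with
            | none => 0
            | some (s', t', u', p', q') => ub ℓ k s' t' u' p' q') +
          childGrowth c s t u p q * j := by
        intro c
        rw [show k + 1 + j = k + j + 1 by omega] at h
        rcases child_sound (c := c) h with h0 | ⟨s', t', u', p', q', X', Y', hc, hx, hy, h'⟩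
        · rw [h0]; exact Nat.zero_le _
        · rw [childGrowth, hc, hx, hy]
          exact ih h'
      have h1 := key false
      have h2 := key true
      have h3 := Nat.mul_le_mul_right j
        (childGrowth_add (u := u) hc.1.1.1 hc.1.1.2 (Nat.ne_of_beq_eq_false hc.1.2)
          (Nat.ne_of_beq_eq_false hc.2))
      rw [Nat.add_mul] at h3
      rw [show k + 1 + j = k + j + 1 by omega, F_succ]
      omega
    · exact hℓ _ _ _ _ _ _ h

theorem lb_le_leafB (k s t : ℕ) (u : Bool) : lb k s t u ≤ leafB k s t u := by
  rcases s with _ | s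
  · rw [lb_zero_left]; exact le_refl _
  rcases t with _ | t
  · rw [lb_zero_right]; exact le_refl _
  rw [leafB]
  cases hc : Nat.blt k 11 && Nat.blt s 4 && Nat.blt t 4
  · exact le_refl _
  · simp only [Bool.and_eq_true, Nat.blt_eq] at hc
    exact tab_le k hc.1.1 s hc.1.2 t hc.2 u

theorem leaf_leafB : Leaf leafB 0 := by
  intro k s t u x y h
  exact (F_le_lb _ h).trans (lb_le_leafB _ _ _ _)

theorem leaf_leafG (j : ℕ) : Leaf leafG j := by
  intro k s t u x y h
  refine (F_le_lb _ h).trans ?_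
  cases u
  · refine (lb_false_le _ _ _).trans (le_trans ?_ (Nat.le_add_right _ _))
    rcases s with _ | s
    · exact (Nat.choose_zero_right _).le
    rcases t with _ | t
    · exact (Nat.choose_self _).le
    change _ ≤ bif Nat.blt s 4 && Nat.blt t 4 then ((tab0.getD s []).getD t []).getD 10 0
      else (s + 1 + (t + 1)).choose (s + 1)
    cases hc : Nat.blt s 4 && Nat.blt t 4
    · exact le_refl _
    · simp only [Bool.and_eq_true, Nat.blt_eq] at hc
      exact tab_ge s hc.1 t hc.2
  · exact (lb_true_add k s t j).trans (Nat.add_le_add_right (lb_le_leafB _ _ _ _) _)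

/-! ### Soundness of the cancellation -/

/-- The two sequences that a term counts the common subsequences of. -/
def cut : Option Bool → List Bool → Option (List Bool)
  | none, x => some x
  | some c, x => after c x

/-- The number that a term stands for, the length being raised by `j`. -/
def val (j : ℕ) (X Y : List Bool) : Term → ℕ
  | (k, _, _, _, o, w, v) => F2 (k + j) (cut o (w ++ X)) (cut o (v ++ Y))

/-- The parameters `s`, `t`, `u` of a term are as in `Hyp`. -/
def Good (j : ℕ) (X Y : List Bool) : Term → Prop
  | (k, s, t, u, o, w, v) => ∀ x y, cut o (w ++ X) = some x → cut o (v ++ Y) = some y →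
    Hyp (k + j) s t u x y

/-- The sequences that a term stands for have no common subsequence two longer than counted. -/
def Null (j : ℕ) (X Y : List Bool) : Term → Prop
  | (k, _, _, _, o, w, v) => F2 (k + j + 2) (cut o (w ++ X)) (cut o (v ++ Y)) = 0

/-- The part of `nf (k + 1) s t u p q` for the first letter `c`. -/
def nfc (k : ℕ) (c : Bool) (s t : ℕ) (u : Bool) (p q : List Bool) : List Term :=
  match child c s t u p q with
  | none => []
  | some (s', t', u', p', q') =>
    bif p.contains c && q.contains c then nf k s' t' u' p' q'
    else [(k, s', t', u', some c, bif p.contains c then c :: p' else [],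
      bif q.contains c then c :: q' else [])]

theorem nf_succ (k s t : ℕ) (u : Bool) (p q : List Bool) :
    nf (k + 1) s t u p q = bif p.isEmpty || q.isEmpty then [(k + 1, s, t, u, none, p, q)]
      else nfc k false s t u p q ++ nfc k true s t u p q := rfl

/-- If `c` occurs in both `p` and `q`, then `nfc` splits further; otherwise it is a single term, whose
sequences are shortened to what determines the part behind the first `c`. -/
theorem nfc_some {k : ℕ} {c u : Bool} {s t : ℕ} {p q : List Bool} {s' t' : ℕ} {u' : Bool}
    {p' q' : List Bool} (h : child c s t u p q = some (s', t', u', p', q')) (X Y : List Bool) :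
    (after c (p ++ X) = some (p' ++ X) ∧ after c (q ++ Y) = some (q' ++ Y) ∧
      nfc k c s t u p q = nf k s' t' u' p' q') ∨
    ∃ w v, after c (p ++ X) = after c (w ++ X) ∧ after c (q ++ Y) = after c (v ++ Y) ∧
      nfc k c s t u p q = [(k, s', t', u', some c, w, v)] := by
  obtain ⟨-, h2, h3⟩ := child_some h
  have e2 := adv_after X h2
  have e3 := adv_after Y h3
  cases hp : p.contains c && q.contains c
  · exact Or.inr ⟨_, _, e2, e3, by rw [nfc, h]; simp only [hp, cond_false]⟩
  · refine Or.inl ⟨?_, ?_, by rw [nfc, h]; simp only [hp, cond_true]⟩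
    · rw [e2, (Bool.and_eq_true_iff.1 hp).1, cond_true, List.cons_append, after_cons_self]
    · rw [e3, (Bool.and_eq_true_iff.1 hp).2, cond_true, List.cons_append, after_cons_self]

/-- The terms of the complete splitting account for all common subsequences, and their parameters
remain valid. -/
theorem nf_upper (j k : ℕ) {s t : ℕ} {u : Bool} {p q X Y : List Bool}
    (h : Hyp (k + j) s t u (p ++ X) (q ++ Y)) :
    F (k + j) (p ++ X) (q ++ Y) ≤ ((nf k s t u p q).map (val j X Y)).sum ∧
      ∀ τ ∈ nf k s t u p q, Good j X Y τ := by
  have single : ∀ k s t u p q, Hyp (k + j) s t u (p ++ X) (q ++ Y) →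
      F (k + j) (p ++ X) (q ++ Y) ≤ (([(k, s, t, u, none, p, q)] : List Term).map (val j X Y)).sum ∧
      ∀ τ ∈ ([(k, s, t, u, none, p, q)] : List Term), Good j X Y τ := by
    intro k s t u p q h
    constructor
    · simp [val, cut, F2]
    · intro τ hτ
      obtain rfl := List.mem_singleton.1 hτ
      intro x y hx hy
      obtain rfl := Option.some.inj hx
      obtain rfl := Option.some.inj hy
      exact h
  induction k generalizing s t u p q with
  | zero => exact single 0 s t u p q h
  | succ k ih =>
    rw [nf_succ]
    cases hc : p.isEmpty || q.isEmpty
    · have key : ∀ c, F2 (k + j) (after c (p ++ X)) (after c (q ++ Y)) ≤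
          ((nfc k c s t u p q).map (val j X Y)).sum ∧ ∀ τ ∈ nfc k c s t u p q, Good j X Y τ := by
        intro c
        rw [show k + 1 + j = k + j + 1 by omega] at h
        rcases hch : child c s t u p q with _ | ⟨s', t', u', p', q'⟩
        · rcases child_sound (c := c) h with h0 | ⟨_, _, _, _, _, _, _, h0, _⟩
          · rw [h0, nfc, hch]; simp
          · rw [hch] at h0; exact absurd h0 (by simp)
        · have hH : ∀ x y, after c (p ++ X) = some x → after c (q ++ Y) = some y →
              Hyp (k + j) s' t' u' x y := by
            intro x y hx hy
            obtain ⟨h1, h2, h3⟩ := child_some hch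
            have g1 := drp_sound (K := k + j) (by rw [← h.2.2]) hx hy
            have g2 := adv_sound h.1 hx
            have g3 := adv_sound h.2.1 hy
            rw [h1] at g1
            rw [h2] at g2
            rw [h3] at g3
            obtain ⟨_, _, g2⟩ := g2
            obtain ⟨_, _, g3⟩ := g3
            exact ⟨g2, g3, g1⟩
          rcases nfc_some (k := k) hch X Y with ⟨hx, hy, e⟩ | ⟨w, v, hx, hy, e⟩
          · rw [e, hx, hy]
            exact ih (hH _ _ hx hy)
          · rw [e]
            constructor
            · simp [val, cut, hx, hy]
            · intro τ hτ
              obtain rfl := List.mem_singleton.1 hτ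
              intro x y hx' hy'
              exact hH x y (hx.trans hx') (hy.trans hy')
      rw [cond_false, List.map_append, List.sum_append, show k + 1 + j = k + j + 1 by omega, F_succ]
      refine ⟨Nat.add_le_add (key _).1 (key _).1, ?_⟩
      intro τ hτ
      rcases List.mem_append.1 hτ with hτ | hτ
      · exact (key _).2 τ hτ
      · exact (key _).2 τ hτ
    · exact single _ _ _ _ _ _ h

/-- The terms never count too much, whatever the parameters: these only serve to discard terms. -/
theorem nf_lower (j k s t : ℕ) (u : Bool) (p q X Y : List Bool) :
    ((nf k s t u p q).map (val j X Y)).sum ≤ F (k + j) (p ++ X) (q ++ Y) := by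
  induction k generalizing s t u p q with
  | zero => simp [nf, val, cut, F2]
  | succ k ih =>
    rw [nf_succ]
    cases hc : p.isEmpty || q.isEmpty
    · have key : ∀ c, ((nfc k c s t u p q).map (val j X Y)).sum ≤
          F2 (k + j) (after c (p ++ X)) (after c (q ++ Y)) := by
        intro c
        rcases hch : child c s t u p q with _ | ⟨s', t', u', p', q'⟩
        · rw [nfc, hch]; exact Nat.zero_le _
        · rcases nfc_some (k := k) hch X Y with ⟨hx, hy, e⟩ | ⟨w, v, hx, hy, e⟩
          · rw [e, hx, hy]
            exact ih ..
          · rw [e, hx, hy]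
            simp [val, cut]
      rw [cond_false, List.map_append, List.sum_append, show k + 1 + j = k + j + 1 by omega, F_succ]
      exact Nat.add_le_add (key _) (key _)
    · simp [val, cut, F2]

/-- That there is no common subsequence two longer than counted is detected by the terms with
`u = true`: by `F_cons_zero`, a common first letter only needs the branch that keeps it. -/
theorem nf_null (j k : ℕ) {s t : ℕ} {p q X Y : List Bool} (hp : (p ++ X).length ≤ k + j + s)
    (hq : (q ++ Y).length ≤ k + j + t)
    (h : ∀ τ ∈ nf k s t true p q, τ.2.2.2.1 = true → Null j X Y τ) :
    F (k + j + 2) (p ++ X) (q ++ Y) = 0 := by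
  induction k generalizing s t p q with
  | zero => exact h (0, s, t, true, none, p, q) (List.mem_singleton.2 rfl) rfl
  | succ k ih =>
    rw [nf_succ] at h
    cases hc : p.isEmpty || q.isEmpty
    · rw [hc, cond_false] at h
      rw [show k + 1 + j = k + j + 1 by omega] at hp hq
      have key : ∀ c, drp c true p q = some true →
          F2 (k + j + 2) (after c (p ++ X)) (after c (q ++ Y)) = 0 := by
        intro c hd
        have hn : ∀ τ ∈ nfc k c s t true p q, τ.2.2.2.1 = true → Null j X Y τ := by
          intro τ hτ
          refine h τ (List.mem_append.2 ?_)
          cases c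
          · exact Or.inl hτ
          · exact Or.inr hτ
        rcases hx : after c (p ++ X) with _ | x'
        · rfl
        rcases hy : after c (q ++ Y) with _ | y'
        · rfl
        have h2 := adv_sound hp hx
        have h3 := adv_sound hq hy
        rcases ha : adv c s p with _ | ⟨s', p'⟩
        · rw [ha] at h2; simp only at h2; exact F_short (Or.inl (by omega))
        rcases hb : adv c t q with _ | ⟨t', q'⟩
        · rw [hb] at h3; simp only at h3; exact F_short (Or.inr (by omega))
        rw [ha] at h2
        rw [hb] at h3
        obtain ⟨_, _, h2⟩ := h2
        obtain ⟨_, _, h3⟩ := h3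
        have hch : child c s t true p q = some (s', t', true, p', q') := by
          simp [child, hd, ha, hb]
        rcases nfc_some (k := k) hch X Y with ⟨hx', hy', e⟩ | ⟨w, v, hx', hy', e⟩
        · rw [hx] at hx'
          rw [hy] at hy'
          obtain rfl := Option.some.inj hx'
          obtain rfl := Option.some.inj hy'
          exact ih h2 h3 (by rwa [← e])
        · have := hn _ (by rw [e]; exact List.mem_singleton.2 rfl) rfl
          rw [← hx, ← hy, hx', hy']
          exact this
      rcases p with _ | ⟨a, p⟩
      · simp at hc
      rcases q with _ | ⟨b, q⟩
      · simp at hc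
      rw [show k + 1 + j + 2 = k + j + 2 + 1 by omega]
      by_cases hab : b = a
      · subst hab
        have := key b (by simp [drp])
        rw [List.cons_append, List.cons_append, after_cons_self, after_cons_self] at this
        exact F_cons_zero b this
      · obtain rfl : b = !a := by cases a <;> cases b <;> simp_all
        rw [F_succ' a, key a (by simp [drp]), key (!a) (by simp [drp])]
    · rw [hc, cond_true] at h
      exact h _ (List.mem_singleton.2 rfl) rfl

theorem sum_le_diff {α : Type} [BEq α] [LawfulBEq α] (f : α → ℕ) (l₁ l₂ : List α) :
    (l₁.map f).sum ≤ ((l₁.diff l₂).map f).sum + (l₂.map f).sum := by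
  induction l₂ generalizing l₁ with
  | nil => simp
  | cons b l₂ ih =>
    rw [List.diff_cons]
    have h1 := ih (l₁.erase b)
    have h2 : (l₁.map f).sum ≤ f b + ((l₁.erase b).map f).sum := by
      by_cases hb : b ∈ l₁
      · exact (((List.perm_cons_erase hb).map f).sum_eq).le
      · rw [List.erase_of_not_mem hb]; omega
    simp only [List.map_cons, List.sum_cons]
    omega

theorem val_le {j : ℕ} {X Y : List Bool} {τ : Term} (h : Good j X Y τ) (hu : τ.2.2.2.1 = false) :
    val j X Y τ ≤ (τ.2.1 + τ.2.2.1).choose τ.2.1 := by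
  obtain ⟨k, s, t, u, o, w, v⟩ := τ
  obtain rfl : u = false := hu
  rw [val]
  rcases hx : cut o (w ++ X) with _ | x
  · exact Nat.zero_le _
  rcases hy : cut o (v ++ Y) with _ | y
  · exact Nat.zero_le _
  exact (F_le_lb _ (h x y hx hy)).trans (lb_false_le _ _ _)

theorem null_of_good {j : ℕ} {X Y : List Bool} {τ : Term} (h : Good j X Y τ)
    (hu : τ.2.2.2.1 = true) : Null j X Y τ := by
  obtain ⟨k, s, t, u, o, w, v⟩ := τ
  obtain rfl : u = true := hu
  rw [Null]
  rcases hx : cut o (w ++ X) with _ | x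
  · rfl
  rcases hy : cut o (v ++ Y) with _ | y
  · rfl
  exact (h x y hx hy).2.2

/-- A removal keeps the absence of common subsequences two longer than counted, so that induction
applies to the shorter pair, and it loses at most `20` of the subsequences counted. -/
theorem removable_sound {j : ℕ} {p q p' q' X Y : List Bool} (hr : removable p q p' q' = true)
    (h : Hyp (10 + j) 4 4 true (p ++ X) (q ++ Y)) :
    (p' ++ X).length + 1 = (p ++ X).length ∧ (q' ++ Y).length + 1 = (q ++ Y).length ∧
    F (11 + j) (p' ++ X) (q' ++ Y) = 0 ∧
    F (10 + j) (p ++ X) (q ++ Y) ≤ F (9 + j) (p' ++ X) (q' ++ Y) + 20 := by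
  simp only [removable, Bool.and_eq_true, Nat.beq_eq, List.all_eq_true, Nat.ble_eq,
    Bool.or_eq_true, Bool.not_eq_true', List.contains_iff_mem] at hr
  obtain ⟨⟨⟨⟨hp, hq⟩, h1⟩, h2⟩, h3⟩ := hr
  obtain ⟨hs, hg⟩ := nf_upper j 10 h
  have hl1 := h.1
  have hl2 := h.2.1
  simp only [List.length_append] at hl1 hl2 ⊢
  refine ⟨by omega, by omega, ?_, ?_⟩
  · have := nf_null j 9 (s := 4) (t := 4) (p := p') (q := q') (X := X) (Y := Y)
      (by simp only [List.length_append]; omega) (by simp only [List.length_append]; omega) ?_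
    · rwa [show 9 + j + 2 = 11 + j by omega] at this
    · intro τ hτ hu
      rcases h1 τ hτ with h0 | h0
      · rw [hu] at h0; exact absurd h0 (by simp)
      · exact null_of_good (hg τ h0) hu
  · refine hs.trans ((sum_le_diff _ _ (nf 9 4 4 true p' q')).trans ?_)
    have e1 := nf_lower j 9 4 4 true p' q' X Y
    have e2 : (((nf 10 4 4 true p q).diff (nf 9 4 4 true p' q')).map (val j X Y)).sum ≤
        (((nf 10 4 4 true p q).diff (nf 9 4 4 true p' q')).map
          fun τ => (τ.2.1 + τ.2.2.1).choose τ.2.1).sum :=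
      List.sum_le_sum fun τ hτ => val_le (hg τ (List.diff_subset _ _ hτ)) (h2 τ hτ)
    omega

/-! ### Soundness of the searches -/

theorem all4_sound {f : List Bool → List Bool → Bool} {p q : List Bool} (h : all4 f p q = true)
    (a b : Bool) : f (p ++ [a]) (q ++ [b]) = true := by
  simp only [all4, Bool.and_eq_true] at h
  cases a <;> cases b <;> tauto

theorem searchB_sound {d : ℕ} {p q X Y : List Bool} (hd : searchB d p q = true)
    (hx : (p ++ X).length = 13) (hy : (q ++ Y).length = 13) (h : F 11 (p ++ X) (q ++ Y) = 0) :
    F 9 (p ++ X) (q ++ Y) ≤ 94 := by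
  induction d generalizing p q X Y with
  | zero => simp [searchB] at hd
  | succ d ih =>
    simp only [searchB, Bool.or_eq_true, Nat.ble_eq, Bool.and_eq_true, Nat.blt_eq,
      Bool.not_eq_true'] at hd
    rcases hd with (hd | hd) | hd
    · exact (F_le_ub leaf_leafB 9 (j := 0) (u := true) ⟨hx.le, hy.le, h⟩).trans hd
    · have h1 := F_append 11 p q X Y
      rw [h] at h1
      rw [Nat.le_zero.mp h1] at hd
      simp at hd
    · rcases X with _ | ⟨a, X⟩
      · simp at hx; omega
      rcases Y with _ | ⟨b, Y⟩
      · simp at hy; omega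
      have e : p ++ a :: X = (p ++ [a]) ++ X := by simp
      have e' : q ++ b :: Y = (q ++ [b]) ++ Y := by simp
      rw [e] at hx h ⊢
      rw [e'] at hy h ⊢
      exact ih (all4_sound hd.2 a b) hx hy h

theorem searchG_sound {j d : ℕ}
    (IH : ∀ x y : List Bool, x.length = 13 + j → y.length = 13 + j → F (11 + j) x y = 0 →
      F (9 + j) x y ≤ 94 + 20 * j)
    {p q X Y : List Bool} (hd : searchG d p q = true)
    (hx : (p ++ X).length = 14 + j) (hy : (q ++ Y).length = 14 + j)
    (h : F (12 + j) (p ++ X) (q ++ Y) = 0) :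
    F (10 + j) (p ++ X) (q ++ Y) ≤ 114 + 20 * j := by
  induction d generalizing p q X Y with
  | zero => simp [searchG] at hd
  | succ d ih =>
    have hH : Hyp (10 + j) 4 4 true (p ++ X) (q ++ Y) :=
      ⟨by omega, by omega, by rw [← h]; congr 1; simp; omega⟩
    rw [searchG, Bool.or_eq_true, Bool.or_eq_true] at hd
    rcases hd with (hd | hd) | hd
    · exact (F_le_ub (leaf_leafG j) 10 hH).trans (Nat.add_le_add_right (Nat.le_of_ble_eq_true hd) _)
    · obtain ⟨r, -, hr⟩ := List.any_eq_true.1 hd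
      obtain ⟨h1, h2, h3, h4⟩ := removable_sound (Bool.and_eq_true_iff.1 hr).2 hH
      have := IH _ _ (by omega) (by omega) h3
      omega
    · simp only [Bool.and_eq_true, Nat.blt_eq] at hd
      rcases X with _ | ⟨a, X⟩
      · simp at hx; omega
      rcases Y with _ | ⟨b, Y⟩
      · simp at hy; omega
      have e : p ++ a :: X = (p ++ [a]) ++ X := by simp
      have e' : q ++ b :: Y = (q ++ [b]) ++ Y := by simp
      rw [e] at hx h hH ⊢
      rw [e'] at hy h hH ⊢
      exact ih (all4_sound hd.2 a b) hx hy h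

/-! ### Induction on the length -/

theorem base (x y : List Bool) (hx : x.length = 13) (hy : y.length = 13) (h : F 11 x y = 0) :
    F 9 x y ≤ 94 := by
  rcases x with _ | ⟨a, x⟩
  · simp at hx
  rcases y with _ | ⟨b, y⟩
  · simp at hy
  have key : ∀ (b : Bool) (x y : List Bool), x.length = 12 → y.length = 12 →
      F 11 (false :: x) (b :: y) = 0 → F 9 (false :: x) (b :: y) ≤ 94 := by
    intro b x y hx hy h
    cases b
    · exact searchB_sound searchB_ff (X := x) (Y := y) (by simp [hx]) (by simp [hy]) h
    · exact searchB_sound searchB_ft (X := x) (Y := y) (by simp [hx]) (by simp [hy]) h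
  simp at hx hy
  cases a
  · exact key b x y hx hy h
  · rw [← F_map_not] at h ⊢
    exact key (!b) _ _ (by simp [hx]) (by simp [hy]) h

theorem step (j : ℕ)
    (IH : ∀ x y : List Bool, x.length = 13 + j → y.length = 13 + j → F (11 + j) x y = 0 →
      F (9 + j) x y ≤ 94 + 20 * j)
    (x y : List Bool) (hx : x.length = 14 + j) (hy : y.length = 14 + j)
    (h : F (12 + j) x y = 0) : F (10 + j) x y ≤ 114 + 20 * j := by
  rcases x with _ | ⟨a, x⟩
  · simp at hx; omega
  rcases y with _ | ⟨b, y⟩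
  · simp at hy; omega
  simp only [List.length_cons] at hx hy
  by_cases hab : b = a
  · subst hab
    have h1 : F (11 + j) x y = 0 := by
      have := F_le_cons b (11 + j) x y
      rw [show 11 + j + 1 = 12 + j by omega, h] at this
      exact Nat.le_zero.mp this
    have h2 := IH x y (by omega) (by omega) h1
    -- At most `(3 + 3).choose 3 = 20` common subsequences start with the other letter.
    have h3 : F2 (9 + j) (after (!b) (b :: x)) (after (!b) (b :: y)) ≤ 20 := by
      rcases hx' : after (!b) (b :: x) with _ | x'
      · exact Nat.zero_le _
      rcases hy' : after (!b) (b :: y) with _ | y'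
      · exact Nat.zero_le _
      have h0 : F (9 + j + 1) x' y' = 0 :=
        F_drop (by simp) (by rw [← h]; congr 1; omega) hx' hy'
      rw [after_cons_ne (by simp)] at hx' hy'
      have l1 := after_length hx'
      have l2 := after_length hy'
      exact (F_le_lb (9 + j) (s := 3) (t := 3) (u := false) ⟨by omega, by omega, h0⟩).trans
        (lb_false_le _ _ _)
    rw [show 10 + j = 9 + j + 1 by omega, F_succ' b, after_cons_self, after_cons_self]
    change F (9 + j) x y + _ ≤ _
    omega
  · obtain rfl : b = !a := by cases a <;> cases b <;> simp_all
    have key : ∀ x y : List Bool, x.length = 13 + j → y.length = 13 + j →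
        F (12 + j) (false :: x) (true :: y) = 0 →
        F (10 + j) (false :: x) (true :: y) ≤ 114 + 20 * j := by
      intro x y hx hy h
      exact searchG_sound IH searchG_ft (X := x) (Y := y) (by simp [hx]; omega)
        (by simp [hy]; omega) h
    cases a
    · exact key x y (by omega) (by omega) h
    · rw [← F_map_not] at h ⊢
      exact key _ _ (by simp; omega) (by simp; omega) h

/-- For `n = 13 + j`, the claimed bound `20 * n - 166` is `94 + 20 * j`. -/
theorem F_bound (j : ℕ) (x y : List Bool) (hx : x.length = 13 + j) (hy : y.length = 13 + j)
    (h : F (11 + j) x y = 0) : F (9 + j) x y ≤ 94 + 20 * j := by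
  induction j generalizing x y with
  | zero => exact base x y hx hy h
  | succ j ih =>
    have := step j ih x y (by omega) (by omega) (by rw [← h]; congr 1; omega)
    rw [show 9 + (j + 1) = 10 + j by omega]
    omega

end LCS

/-- For all `n ≥ 13` and binary sequences `x, y` of length `n` with Levenshtein
distance at least `3`, the `4`-deletion balls of `x` and `y` intersect in at most
`20n - 166` sequences. -/
theorem stmt18 (n : ℕ) (hn : 13 ≤ n) (x y : List Bool)
    (hx : x.length = n) (hy : y.length = n) (hd : 3 ≤ levDist x y) :
    (delBall 4 x ∩ delBall 4 y).ncard ≤ 20 * n - 166 := by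
  obtain ⟨j, rfl⟩ : ∃ j, n = 13 + j := ⟨n - 13, by omega⟩
  have h0 : LCS.F (11 + j) x y = 0 := by
    rw [← LCS.commons_length, List.length_eq_zero_iff, List.eq_nil_iff_forall_not_mem]
    intro z hz
    obtain ⟨h1, h2, h3⟩ := (LCS.mem_commons ..).1 hz
    have : levDist x y ≤ 2 := Nat.sInf_le ⟨z, ⟨h1, by omega⟩, ⟨h2, by omega⟩⟩
    omega
  have h1 := LCS.F_bound j x y hx hy h0
  have h2 : delBall 4 x ∩ delBall 4 y ⊆ ((LCS.commons (9 + j) x y).toFinset : Set (List Bool)) := by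
    rintro z ⟨⟨hz, hl⟩, ⟨hz', -⟩⟩
    rw [Finset.mem_coe, List.mem_toFinset, LCS.mem_commons]
    exact ⟨hz, hz', by omega⟩
  have h3 := Set.ncard_le_ncard h2 (Finset.finite_toSet _)
  rw [Set.ncard_coe_finset] at h3
  have h4 := List.toFinset_card_le (LCS.commons (9 + j) x y)
  rw [LCS.commons_length] at h4
  omega
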